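/- Over a field of characteristic not 2, a square matrix M is the sum of two square-zero matrices if and only if M is similar to −M. -/

import Mathlib

/-!
If `M = A + B` with `A ^ 2 = B ^ 2 = 0`, then `D = A - B` anticommutes with `M` and
`D ^ 2 = -M ^ 2`, so `D` is injective away from the kernels of the powers of `M`. Conversely, if an
involution `S` anticommutes with `M` and `2` is invertible, then `M = M(1 + S)/2 + M(1 - S)/2` and
both terms have square zero. What remains is to turn an anticommuting `D` into an invertible
anticommuting `T`, and an invertible anticommuting `T` into an involution.

Regard the space as a torsion `F[X]`-module, so that the anticommuting maps are those semilinear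
with respect to `σ : p(X) ↦ p(-X)`. It splits into the primary parts of the primes fixed by `σ` up
to units, and those of the remaining primes, which `σ` exchanges in pairs `p`, `σ p`. On the former
a decomposition into cyclic modules `F[X] / (p ^ n)` provides a semilinear involution, namely that
induced by `σ`; this repairs `D` on the kernels of the powers of `M`. On the latter `T` exchanges
the two halves, and using `T` on one half and `T⁻¹` on the other gives an involution. The halves are
cut out by `f` and `σ f` for a suitable polynomial `f`.
-/

section InvolutiveAutomorphism

variable {R : Type*} [CommRing R] {σ : R ≃+* R}

/-- Every irreducible factor of `a` divides its own image under `σ`. When `σ` is involutive this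
says that `σ` preserves each irreducible factor of `a` up to a unit. -/
def HasSymmetricFactors (σ : R ≃+* R) (a : R) : Prop :=
  ∀ p, Irreducible p → p ∣ a → p ∣ σ p

theorem hasSymmetricFactors_one : HasSymmetricFactors σ 1 :=
  fun _ hp hp1 ↦ absurd (isUnit_of_dvd_one hp1) hp.not_isUnit

variable {a b p m : R}

theorem hasSymmetricFactors_of_irreducible (hp : Irreducible p) (hσp : p ∣ σ p) :
    HasSymmetricFactors σ p := fun _ hq hqp ↦
  have hpq := (hq.associated_of_dvd hp hqp).symm.dvd
  hqp.trans (hσp.trans (map_dvd σ hpq))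

theorem HasSymmetricFactors.map (hσ : Function.Involutive σ) (ha : HasSymmetricFactors σ a) :
    HasSymmetricFactors σ (σ a) := fun p hp hpa ↦ by
  have hσp : Irreducible (σ p) := (MulEquiv.irreducible_iff σ).2 hp
  have hσpa : σ p ∣ a := by simpa only [hσ a] using map_dvd σ hpa
  have hdvd : σ p ∣ p := by simpa only [hσ p] using ha _ hσp hσpa
  exact (hσp.associated_of_dvd hp hdvd).symm.dvd

theorem isCoprime_mul_map_mul (hσ : Function.Involutive σ) (hb : IsCoprime b (σ b))
    (hp : IsCoprime p (σ p)) (hpb : IsCoprime p (σ b)) : IsCoprime (b * p) (σ (b * p)) := by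
  have hbp : IsCoprime b (σ p) := by simpa [hσ b] using (hpb.map (σ : R →+* R)).symm
  rw [map_mul]
  exact (hb.mul_right hbp).mul_left (hpb.mul_right hp)

variable [IsPrincipalIdealRing R]

theorem exists_semilinear_quotient_prime_pow (hσ : Function.Involutive σ)
    (ha : HasSymmetricFactors σ a) (hp : Irreducible p) (n : ℕ) :
    ∃ s : (R ⧸ Submodule.span R {p ^ n}) →ₛₗ[(σ : R →+* R)] R ⧸ Submodule.span R {p ^ n},
      ∀ x, a • x = 0 → s (s x) = x := by
  by_cases hsymm : p ∣ σ p
  · have hle : Submodule.span R {p ^ n} ≤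
        (Submodule.span R {p ^ n}).comap (σ : R →+* R).toSemilinearMap := by
      refine (Submodule.span_singleton_le_iff_mem _ _).2 (Ideal.mem_span_singleton.2 ?_)
      simpa using pow_dvd_pow_of_dvd hsymm n
    refine ⟨Submodule.mapQ _ _ _ hle, fun x _ ↦ ?_⟩
    obtain ⟨r, rfl⟩ := Submodule.Quotient.mk_surjective _ x
    exact congrArg Submodule.Quotient.mk (hσ r)
  · have hcop : IsCoprime (p ^ n) a :=
      (hp.coprime_iff_not_dvd.2 fun hpa ↦ hsymm (ha p hp hpa)).pow_left
    refine ⟨0, fun x hx ↦ ?_⟩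
    obtain ⟨r, rfl⟩ := Submodule.Quotient.mk_surjective _ x
    rw [← Submodule.Quotient.mk_smul, Submodule.Quotient.mk_eq_zero] at hx
    refine ((Submodule.Quotient.mk_eq_zero _).2 (Ideal.mem_span_singleton.2 ?_)).symm
    exact hcop.dvd_of_dvd_mul_left (Ideal.mem_span_singleton.1 hx)

variable [IsDomain R]

namespace HasSymmetricFactors

theorem mul (ha : HasSymmetricFactors σ a) (hb : HasSymmetricFactors σ b) :
    HasSymmetricFactors σ (a * b) :=
  fun p hp hpab ↦ (hp.prime.dvd_or_dvd hpab).elim (ha p hp) (hb p hp)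

theorem pow (ha : HasSymmetricFactors σ a) (n : ℕ) : HasSymmetricFactors σ (a ^ n) :=
  fun p hp hpa ↦ ha p hp (hp.prime.dvd_of_dvd_pow hpa)

theorem isCoprime (ha : HasSymmetricFactors σ a) (hb : IsCoprime b (σ b)) : IsCoprime a b := by
  refine isCoprime_of_irreducible_dvd ?_ fun p hp hpa hpb ↦ ?_
  · rintro ⟨-, rfl⟩
    exact not_isCoprime_zero_zero (by simpa only [map_zero] using hb)
  · exact hp.not_isUnit (hb.isUnit_of_dvd' hpb ((ha p hp hpa).trans (map_dvd σ hpb)))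

theorem isCoprime_mul_map (hσ : Function.Involutive σ) (ha : HasSymmetricFactors σ a)
    (hb : IsCoprime b (σ b)) : IsCoprime a (b * σ b) :=
  (ha.isCoprime hb).mul_right (ha.isCoprime (by rw [hσ b]; exact hb.symm))

end HasSymmetricFactors

theorem exists_dvd_symmetric_mul_mul_map (hσ : Function.Involutive σ) (hm : m ≠ 0) :
    ∃ a b, HasSymmetricFactors σ a ∧ σ a = a ∧ IsCoprime b (σ b) ∧ m ∣ a * (b * σ b) := by
  induction m using UniqueFactorizationMonoid.induction_on_prime with
  | h₁ => exact absurd rfl hm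
  | h₂ m hu =>
    exact ⟨1, 1, hasSymmetricFactors_one, map_one σ, isCoprime_one_left, hu.dvd⟩
  | h₃ m p hm0 hprime ih =>
    obtain ⟨a, b, ha, hσa, hb, c, hc⟩ := ih hm0
    have hp := hprime.irreducible
    by_cases hsymm : p ∣ σ p
    · have hp' := hasSymmetricFactors_of_irreducible hp hsymm
      refine ⟨p * σ p * a, b, (hp'.mul (hp'.map hσ)).mul ha, ?_, hb, c * σ p, ?_⟩
      · rw [map_mul, map_mul, hσ p, hσa, mul_comm (σ p)]
      · linear_combination p * σ p * hc
    · have hpσp : IsCoprime p (σ p) := hp.coprime_iff_not_dvd.2 hsymm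
      by_cases hpb : p ∣ σ b
      · have hσpb : IsCoprime (σ p) (σ b) :=
          (hb.of_isCoprime_of_dvd_right hpb).symm.map (σ : R →+* R)
        refine ⟨a, b * σ p, ha, hσa, isCoprime_mul_map_mul hσ hb ?_ hσpb, c * σ p, ?_⟩
        · rw [hσ p]
          exact hpσp.symm
        · rw [map_mul, hσ p]
          linear_combination p * σ p * hc
      · refine ⟨a, b * p, ha, hσa, isCoprime_mul_map_mul hσ hb hpσp (hp.coprime_iff_not_dvd.2 hpb),
          c * σ p, ?_⟩
        rw [map_mul]
        linear_combination p * σ p * hc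

theorem exists_orthogonal_idempotents_mod (hσ : Function.Involutive σ) (hm : m ≠ 0) :
    ∃ a f, HasSymmetricFactors σ a ∧ m ∣ f * (1 - f) ∧ m ∣ σ f * (1 - σ f) ∧ m ∣ f * σ f ∧
      m ∣ a * (1 - f - σ f) ∧ ∀ q, HasSymmetricFactors σ q → q ∣ m → q ∣ f ∧ q ∣ σ f := by
  obtain ⟨a, b, ha, hσa, hb, hdvd⟩ := exists_dvd_symmetric_mul_mul_map hσ hm
  obtain ⟨u, v, huv⟩ : IsCoprime b (a * σ b) := (ha.isCoprime hb).symm.mul_right hb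
  have hσuv : σ u * σ b + σ v * (a * b) = 1 := by
    simpa only [map_add, map_mul, map_one, hσ b, hσa] using congrArg σ huv
  -- By the Chinese remainder theorem `f`, `σ f` and `1 - f - σ f` are the idempotents modulo
  -- `a * (b * σ b)` belonging to the factors `b`, `σ b` and `a`.
  set f := v * (a * σ b) with hf
  have hσf : σ f = σ v * (a * b) := by simp only [hf, map_mul, hσ b, hσa]
  refine ⟨a, f, ha, hdvd.trans ⟨u * v, ?_⟩, hdvd.trans ⟨σ u * σ v, ?_⟩,
    hdvd.trans ⟨v * σ v * a, ?_⟩, hdvd.trans ⟨u * σ u - a ^ 2 * (v * σ v), ?_⟩, fun q hq hqm ↦ ?_⟩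
  · linear_combination -f * huv
  · rw [hσf]
    linear_combination -(σ v * (a * b)) * hσuv
  · rw [hσf]
    ring
  · rw [hσf]
    linear_combination -a * huv * (σ u * σ b) + a * (f - 1) * hσuv
  · have hqa : q ∣ a := (hq.isCoprime_mul_map hσ hb).dvd_of_dvd_mul_right (hqm.trans hdvd)
    rw [hσf]
    exact ⟨(hqa.mul_right _).mul_left _, (hqa.mul_right _).mul_left _⟩

theorem exists_semilinear_involutive_on_torsionBy {M : Type*} [AddCommGroup M] [Module R M]
    [Module.Finite R M] (hM : Module.IsTorsion R M) (hσ : Function.Involutive σ)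
    (ha : HasSymmetricFactors σ a) :
    ∃ s : M →ₛₗ[(σ : R →+* R)] M, ∀ x, a • x = 0 → s (s x) = x := by
  classical
  obtain ⟨ι, _, p, hp, e, ⟨E⟩⟩ := Module.equiv_directSum_of_isTorsion hM
  choose s hs using fun i ↦ exists_semilinear_quotient_prime_pow hσ ha (hp i) (e i)
  let t : (DirectSum ι fun i ↦ R ⧸ Submodule.span R {p i ^ e i}) →ₛₗ[(σ : R →+* R)]
      DirectSum ι fun i ↦ R ⧸ Submodule.span R {p i ^ e i} :=
    { DirectSum.map fun i ↦ (s i).toAddMonoidHom with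
      map_smul' r x := by
        ext i
        simp [DirectSum.smul_apply] }
  have ht : ∀ x, a • x = 0 → t (t x) = x := fun x hx ↦ by
    ext i
    exact hs i _ (by rw [← DirectSum.smul_apply, hx, DirectSum.zero_apply])
  refine ⟨E.symm.toLinearMap.comp (t.comp E.toLinearMap), fun x hx ↦ ?_⟩
  simp [ht (E x) (by rw [← map_smul, hx, map_zero])]

end InvolutiveAutomorphism

open Polynomial

section Reflection

/-- The reflection `p(X) ↦ p(-X)` as an automorphism of the polynomial ring. -/
noncomputable def reflection (F : Type*) [CommRing F] : F[X] ≃+* F[X] :=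
  algEquivAevalNegX.toRingEquiv

theorem reflection_apply {F : Type*} [CommRing F] (p : F[X]) : reflection F p = p.comp (-X) :=
  rfl

theorem reflection_involutive (F : Type*) [CommRing F] : Function.Involutive (reflection F) :=
  comp_neg_X_comp_neg_X

theorem hasSymmetricFactors_X {F : Type*} [CommRing F] [IsDomain F] :
    HasSymmetricFactors (reflection F) X :=
  hasSymmetricFactors_of_irreducible irreducible_X (by simp [reflection_apply])

end Reflection

theorem swap_add_mul_self_eq_one {A : Type*} [Ring A] {e e' g s : A} (t : Aˣ)
    (he : IsIdempotentElem e) (he' : IsIdempotentElem e') (hee' : e * e' = 0) (he'e : e' * e = 0)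
    (hg : g = 1 - e - e') (hte : SemiconjBy (t : A) e e')
    (hsg : Commute s g) (hsq : s * s * g = g) :
    (t * e + ↑t⁻¹ * e' + s * g) * (t * e + ↑t⁻¹ * e' + s * g) = 1 := by
  have heg : e * g = 0 := by simp only [hg, mul_sub, mul_one, he.eq, hee', sub_self]
  have he'g : e' * g = 0 := by simp only [hg, mul_sub, mul_one, he'.eq, he'e, sub_zero, sub_self]
  have hge : g * e = 0 := by simp only [hg, sub_mul, one_mul, he.eq, he'e, sub_self]
  have hge' : g * e' = 0 := by simp only [hg, sub_mul, one_mul, he'.eq, hee', sub_zero, sub_self]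
  have hgg : g * g = g := by
    nth_rw 2 [hg]
    rw [mul_sub, mul_sub, mul_one, hge, hge', sub_zero, sub_zero]
  -- With one factor written in this form, all cross terms contain a product of two of `e, e', g`.
  have hleft : t * e + ↑t⁻¹ * e' + s * g = e' * t + e * ↑t⁻¹ + g * s := by
    rw [hte.eq, hte.units_inv_symm_left.eq, hsg.eq]
  calc (t * e + ↑t⁻¹ * e' + s * g) * (t * e + ↑t⁻¹ * e' + s * g)
      = (t * e + ↑t⁻¹ * e' + s * g) * (e' * t + e * ↑t⁻¹ + g * s) := by rw [← hleft]
    _ = t * (e * e') * t + t * (e * e) * ↑t⁻¹ + t * (e * g) * s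
        + (↑t⁻¹ * (e' * e') * t + ↑t⁻¹ * (e' * e) * ↑t⁻¹ + ↑t⁻¹ * (e' * g) * s)
        + (s * (g * e') * t + s * (g * e) * ↑t⁻¹ + s * (g * g) * s) := by
      noncomm_ring
    _ = t * e * ↑t⁻¹ + ↑t⁻¹ * e' * t + s * g * s := by
      simp only [hee', he.eq, heg, he'.eq, he'e, he'g, hge', hge, hgg, mul_zero, zero_mul,
        zero_add, add_zero]
    _ = e' + e + g := by
      rw [hte.eq, Units.mul_inv_cancel_right, mul_assoc _ e', ← hte.eq,
        Units.inv_mul_cancel_left, mul_assoc s, ← hsg.eq, ← mul_assoc, hsq]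
    _ = 1 := by
      rw [hg]
      abel

section Algebra

variable {F A : Type*} [CommRing F] [Ring A] [Algebra F A] {x y s t : A} {f : F[X]}

theorem commute_aeval_self (x : A) (p : F[X]) : Commute (aeval x p) x := by
  simpa only [aeval_X] using (Commute.all p X).map (aeval x)

theorem semiconjBy_aeval (h : SemiconjBy t x y) (p : F[X]) :
    SemiconjBy t (aeval x p) (aeval y p) := by
  induction p using Polynomial.induction_on' with
  | add p q hp hq => simpa only [map_add] using hp.add_right hq
  | monomial n c =>
    simp only [aeval_monomial]
    exact SemiconjBy.mul_right (Algebra.commutes c t).symm (h.pow_right n)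

theorem semiconjBy_aeval_reflection (h : SemiconjBy t x (-x)) (p : F[X]) :
    SemiconjBy t (aeval x p) (aeval x (reflection F p)) := by
  rw [reflection_apply, aeval_comp, map_neg, aeval_X]
  exact semiconjBy_aeval h p

theorem commute_aeval_one_sub_sub_reflection (h : SemiconjBy t x (-x)) (f : F[X]) :
    Commute t (aeval x (1 - f - reflection F f)) := by
  have hfix : reflection F (1 - f - reflection F f) = 1 - f - reflection F f := by
    rw [map_sub, map_sub, map_one, reflection_involutive, sub_right_comm]
  have hsemi := semiconjBy_aeval_reflection h (1 - f - reflection F f)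
  rwa [hfix] at hsemi

/-- The elements `f(x)`, `f(-x)` and `1 - f(x) - f(-x)` are orthogonal idempotents, and `s` is an
element anticommuting with `x` that is an involution on the last of the three parts. Any element
anticommuting with `x` exchanges the first two parts and preserves the third. -/
structure IsReversingSplitting (x s : A) (f : F[X]) : Prop where
  semiconjBy : SemiconjBy s x (-x)
  isIdempotentElem : IsIdempotentElem (aeval x f)
  isIdempotentElem_reflection : IsIdempotentElem (aeval x (reflection F f))
  mul_reflection : aeval x f * aeval x (reflection F f) = 0
  sq_mul : s * s * aeval x (1 - f - reflection F f) = aeval x (1 - f - reflection F f)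

namespace IsReversingSplitting

theorem reflection_mul (h : IsReversingSplitting x s f) :
    aeval x (reflection F f) * aeval x f = 0 := by
  rw [← map_mul, mul_comm, map_mul, h.mul_reflection]

theorem isIdempotentElem_one_sub_sub (h : IsReversingSplitting x s f) :
    IsIdempotentElem (aeval x (1 - f - reflection F f)) := by
  have hadd : IsIdempotentElem (aeval x f + aeval x (reflection F f)) :=
    h.isIdempotentElem.add h.isIdempotentElem_reflection
      (by rw [h.mul_reflection, h.reflection_mul, add_zero])
  rw [map_sub, map_sub, map_one, sub_sub]
  exact hadd.one_sub

theorem exists_involution (h : IsReversingSplitting x s f) (t : Aˣ)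
    (ht : SemiconjBy (t : A) x (-x)) : ∃ S : A, S * S = 1 ∧ SemiconjBy S x (-x) := by
  have ht_inv : SemiconjBy (↑t⁻¹ : A) x (-x) := by
    simpa only [neg_neg] using ht.units_inv_symm_left.neg_right
  have hmul {r : A} (hr : SemiconjBy r x (-x)) (p : F[X]) : SemiconjBy (r * aeval x p) x (-x) :=
    hr.mul_left (commute_aeval_self x p)
  have hsq := swap_add_mul_self_eq_one t h.isIdempotentElem h.isIdempotentElem_reflection
    h.mul_reflection h.reflection_mul (by simp only [map_sub, map_one])
    (semiconjBy_aeval_reflection ht f) (commute_aeval_one_sub_sub_reflection h.semiconjBy f)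
    h.sq_mul
  exact ⟨_, hsq, ((hmul ht _).add_left (hmul ht_inv _)).add_left (hmul h.semiconjBy _)⟩

end IsReversingSplitting

end Algebra

section Endomorphism

variable {F V : Type*} [Field F] [AddCommGroup V] [Module F V] [FiniteDimensional F V]

theorem exists_reversing_involutive_on_ker_aeval (φ : Module.End F V) {a : F[X]}
    (ha : HasSymmetricFactors (reflection F) a) :
    ∃ s : Module.End F V, SemiconjBy s φ (-φ) ∧ ∀ v, aeval φ a v = 0 → s (s v) = v := by
  obtain ⟨s, hs⟩ := exists_semilinear_involutive_on_torsionBy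
    (Module.AEval.isTorsion_of_finiteDimensional F V φ) (reflection_involutive F) ha
  let o := Module.AEval.of F V φ
  let S : V →ₗ[F] V :=
    { toFun v := o.symm (s (o v))
      map_add' v w := by simp only [map_add]
      map_smul' c v := by
        have hc : reflection F (C c) = C c := C_comp
        rw [map_smul, ← Module.AEval.C_smul, map_smulₛₗ, RingEquiv.coe_toRingHom, hc,
          Module.AEval.C_smul, map_smul, RingHom.id_apply] }
  refine ⟨S, LinearMap.ext fun v ↦ ?_, fun v hv ↦ ?_⟩
  · change o.symm (s (o (φ • v))) = -φ (o.symm (s (o v)))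
    have hX : reflection F X = -X := X_comp
    rw [← Module.AEval.X_smul_of, map_smulₛₗ, RingEquiv.coe_toRingHom, hX, neg_smul, map_neg,
      Module.AEval.of_symm_X_smul]
    rfl
  · change o.symm (s (o (o.symm (s (o v))))) = v
    have hav : a • o v = 0 := by
      rw [← Module.AEval.of_aeval_smul]
      exact (congrArg o hv).trans (map_zero o)
    rw [o.apply_symm_apply, hs _ hav, o.symm_apply_apply]

theorem exists_isReversingSplitting (φ : Module.End F V) (k : ℕ) :
    ∃ (s : Module.End F V) (f : F[X]), IsReversingSplitting φ s f ∧
      ∀ v, (φ ^ k) v = 0 → aeval φ f v = 0 ∧ aeval φ (reflection F f) v = 0 := by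
  have hm : X ^ k * minpoly F φ ≠ 0 :=
    mul_ne_zero (pow_ne_zero k X_ne_zero) (minpoly.ne_zero_of_finite F φ)
  obtain ⟨a, f, ha, hf, hf', horth, hsymm, hdvd⟩ :=
    exists_orthogonal_idempotents_mod (reflection_involutive F) hm
  obtain ⟨s, hs, hss⟩ := exists_reversing_involutive_on_ker_aeval φ ha
  have hzero {p : F[X]} (hp : X ^ k * minpoly F φ ∣ p) : aeval φ p = 0 :=
    (minpoly.dvd_iff).1 ((dvd_mul_left _ _).trans hp)
  have hker {p : F[X]} (hp : X ^ k ∣ p) (v : V) (hv : (φ ^ k) v = 0) : aeval φ p v = 0 := by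
    obtain ⟨q, rfl⟩ := hp
    rw [mul_comm, map_mul, Module.End.mul_apply, map_pow, aeval_X, hv, map_zero]
  have hidem {p : F[X]} (hp : X ^ k * minpoly F φ ∣ p * (1 - p)) :
      IsIdempotentElem (aeval φ p) := by
    have hsub := hzero hp
    rw [mul_sub, mul_one, map_sub, map_mul, sub_eq_zero] at hsub
    exact hsub.symm
  obtain ⟨hXf, hXf'⟩ := hdvd (X ^ k) (hasSymmetricFactors_X.pow k) (dvd_mul_right _ _)
  refine ⟨s, f, ⟨hs, hidem hf, hidem hf', ?_, LinearMap.ext fun v ↦ hss _ ?_⟩,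
    fun v hv ↦ ⟨hker hXf v hv, hker hXf' v hv⟩⟩
  · rw [← map_mul, hzero horth]
  · rw [← Module.End.mul_apply, ← map_mul, hzero hsymm, LinearMap.zero_apply]

theorem exists_unit_semiconjBy_neg {φ D : Module.End F V} (hD : SemiconjBy D φ (-φ)) {k : ℕ}
    (hker : ∀ v, D v = 0 → (φ ^ k) v = 0) :
    ∃ T : (Module.End F V)ˣ, SemiconjBy (T : Module.End F V) φ (-φ) := by
  obtain ⟨s, f, h, hf⟩ := exists_isReversingSplitting φ k
  have hsg := (commute_aeval_one_sub_sub_reflection h.semiconjBy f).eq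
  have hDg := (commute_aeval_one_sub_sub_reflection hD f).eq
  have hgg := h.isIdempotentElem_one_sub_sub.eq
  have hg : aeval φ (1 - f - reflection F f) = 1 - aeval φ f - aeval φ (reflection F f) := by
    simp only [map_sub, map_one]
  set g := aeval φ (1 - f - reflection F f) with hgdef
  set T := D * (1 - g) + s * g with hT
  have hTφ : SemiconjBy T φ (-φ) :=
    (hD.mul_left ((Commute.one_left φ).sub_left (commute_aeval_self φ _))).add_left
      (h.semiconjBy.mul_left (commute_aeval_self φ _))
  have hgT : g * T = s * g := by
    rw [hT, mul_add, ← mul_assoc, ← mul_assoc, ← hsg, ← hDg, mul_assoc D, mul_sub, hgg, mul_one,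
      sub_self, mul_zero, zero_add, mul_assoc, hgg]
  have hTinj : LinearMap.ker T = ⊥ := by
    refine LinearMap.ker_eq_bot'.2 fun v hv ↦ ?_
    have hsgv : s (g v) = 0 := by
      have := LinearMap.congr_fun hgT v
      simpa only [Module.End.mul_apply, hv, map_zero] using this.symm
    have hgv : g v = 0 := by
      have := LinearMap.congr_fun h.sq_mul v
      simpa [hsgv, ← hgdef] using this.symm
    have hDv : D v = 0 := by simpa [hT, hgv] using hv
    obtain ⟨hev, hev'⟩ := hf v (hker v hDv)
    simpa [hg, hev, hev'] using hgv
  obtain ⟨T', hT'⟩ := (LinearMap.isUnit_iff_ker_eq_bot T).2 hTinj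
  exact ⟨T', hT' ▸ hTφ⟩

theorem exists_involution_semiconjBy_neg {φ : Module.End F V} (T : (Module.End F V)ˣ)
    (hT : SemiconjBy (T : Module.End F V) φ (-φ)) :
    ∃ S : Module.End F V, S * S = 1 ∧ SemiconjBy S φ (-φ) := by
  obtain ⟨s, f, h, -⟩ := exists_isReversingSplitting φ 0
  exact h.exists_involution T hT

end Endomorphism

section SumOfTwoSquareZero

variable {R S : Type*} [Ring R] [Ring S] {a b s x : R}

/-- `x` is a sum of two elements of square zero. -/
def IsSumOfTwoSquareZero (x : R) : Prop :=
  ∃ a b : R, a ^ 2 = 0 ∧ b ^ 2 = 0 ∧ x = a + b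

/-- `x` is similar to `-x`, that is, conjugate to it by a unit. -/
def IsSimilarToNeg (x : R) : Prop :=
  ∃ u : Rˣ, -x = u * x * ↑u⁻¹

theorem isSimilarToNeg_iff_semiconjBy :
    IsSimilarToNeg x ↔ ∃ u : Rˣ, SemiconjBy (u : R) x (-x) :=
  exists_congr fun u ↦ by rw [Units.eq_mul_inv_iff_mul_eq, SemiconjBy, eq_comm]

theorem IsSumOfTwoSquareZero.map (e : R ≃+* S) (hx : IsSumOfTwoSquareZero x) :
    IsSumOfTwoSquareZero (e x) := by
  obtain ⟨a, b, ha, hb, rfl⟩ := hx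
  exact ⟨e a, e b, by rw [← map_pow, ha, map_zero], by rw [← map_pow, hb, map_zero], map_add e a b⟩

theorem IsSimilarToNeg.map (e : R ≃+* S) (hx : IsSimilarToNeg x) : IsSimilarToNeg (e x) := by
  obtain ⟨u, hu⟩ := isSimilarToNeg_iff_semiconjBy.1 hx
  exact isSimilarToNeg_iff_semiconjBy.2
    ⟨Units.map e u, by simpa using hu.map e⟩

theorem isSumOfTwoSquareZero_map_iff (e : R ≃+* S) :
    IsSumOfTwoSquareZero (e x) ↔ IsSumOfTwoSquareZero x :=
  ⟨fun h ↦ by simpa using h.map e.symm, .map e⟩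

theorem isSimilarToNeg_map_iff (e : R ≃+* S) : IsSimilarToNeg (e x) ↔ IsSimilarToNeg x :=
  ⟨fun h ↦ by simpa using h.map e.symm, .map e⟩

theorem isSumOfTwoSquareZero_of_involution [Invertible (2 : R)] (hs : s * s = 1)
    (hsx : SemiconjBy s x (-x)) : IsSumOfTwoSquareZero x := by
  have hsx' : s * x = -(x * s) := by rw [hsx.eq, neg_mul]
  have hsq (y : R) (hy : y ^ 2 = 0) : (⅟2 * y) ^ 2 = 0 := by
    have : Commute (⅟2 : R) y := (Commute.ofNat_left 2 y).invOf_left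
    rw [this.mul_pow, hy, mul_zero]
  refine ⟨⅟2 * (x * (1 + s)), ⅟2 * (x * (1 - s)), hsq _ ?_, hsq _ ?_, ?_⟩
  · calc (x * (1 + s)) ^ 2 = x * (x + s * x) * (1 + s) := by noncomm_ring
      _ = x * x * (1 - s * s) := by rw [hsx']; noncomm_ring
      _ = 0 := by rw [hs, sub_self, mul_zero]
  · calc (x * (1 - s)) ^ 2 = x * (x - s * x) * (1 - s) := by noncomm_ring
      _ = x * x * (1 - s * s) := by rw [hsx']; noncomm_ring
      _ = 0 := by rw [hs, sub_self, mul_zero]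
  · rw [← mul_add, ← mul_add, add_add_sub_cancel, one_add_one_eq_two, (Commute.ofNat_right x 2).eq,
      invOf_mul_cancel_left]

theorem semiconjBy_sub_add_of_sq_eq_zero (ha : a ^ 2 = 0) (hb : b ^ 2 = 0) :
    SemiconjBy (a - b) (a + b) (-(a + b)) := by
  rw [SemiconjBy, ← sub_eq_zero]
  calc (a - b) * (a + b) - -(a + b) * (a - b) = 2 * a ^ 2 - 2 * b ^ 2 := by noncomm_ring
    _ = 0 := by simp only [ha, hb, mul_zero, sub_zero]

theorem add_sq_eq_neg_sub_sq_of_sq_eq_zero (ha : a ^ 2 = 0) (hb : b ^ 2 = 0) :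
    (a + b) ^ 2 = -(a - b) ^ 2 := by
  rw [← sub_eq_zero]
  calc (a + b) ^ 2 - -(a - b) ^ 2 = 2 * a ^ 2 + 2 * b ^ 2 := by noncomm_ring
    _ = 0 := by simp only [ha, hb, mul_zero, add_zero]

end SumOfTwoSquareZero

theorem IsSumOfTwoSquareZero.isSimilarToNeg {F V : Type*} [Field F] [AddCommGroup V] [Module F V]
    [FiniteDimensional F V] {φ : Module.End F V} (hφ : IsSumOfTwoSquareZero φ) :
    IsSimilarToNeg φ := by
  obtain ⟨α, β, hα, hβ, rfl⟩ := hφ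
  rw [isSimilarToNeg_iff_semiconjBy]
  refine exists_unit_semiconjBy_neg (k := 2) (semiconjBy_sub_add_of_sq_eq_zero hα hβ) fun v hv ↦ ?_
  rw [add_sq_eq_neg_sub_sq_of_sq_eq_zero hα hβ, LinearMap.neg_apply, pow_two,
    Module.End.mul_apply, hv, map_zero, neg_zero]

theorem sum_two_square_zero_iff_similar_neg_general {F V : Type*} [Field F] [AddCommGroup V]
    [Module F V] [FiniteDimensional F V] (hchar : ringChar F ≠ 2) (φ : Module.End F V) :
    (∃ α β : Module.End F V, α ^ 2 = 0 ∧ β ^ 2 = 0 ∧ φ = α + β) ↔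
      ∃ T : (Module.End F V)ˣ, -φ = T * φ * ↑T⁻¹ := by
  refine ⟨IsSumOfTwoSquareZero.isSimilarToNeg, fun hφ ↦ ?_⟩
  obtain ⟨T, hT⟩ := isSimilarToNeg_iff_semiconjBy.1 hφ
  obtain ⟨S, hS, hSφ⟩ := exists_involution_semiconjBy_neg T hT
  have := invertibleOfNonzero (Ring.two_ne_zero hchar)
  have : Invertible (2 : Module.End F V) :=
    (Invertible.map (algebraMap F (Module.End F V)) 2).copy _ (map_ofNat _ 2).symm
  exact isSumOfTwoSquareZero_of_involution hS hSφ

/-- Over a field of characteristic not 2, a matrix is the sum of two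
square-zero matrices iff it is similar to its opposite. -/
theorem sum_two_square_zero_iff_similar_neg (F : Type*) [Field F]
    (hchar : ringChar F ≠ 2) (n : ℕ) (M : Matrix (Fin n) (Fin n) F) :
    (∃ A B : Matrix (Fin n) (Fin n) F, A ^ 2 = 0 ∧ B ^ 2 = 0 ∧ M = A + B) ↔
      (∃ P : (Matrix (Fin n) (Fin n) F)ˣ, -M = (P : Matrix (Fin n) (Fin n) F) * M * ((↑P⁻¹ : Matrix (Fin n) (Fin n) F))) :=
  let Φ := Matrix.toLinAlgEquiv'.toRingEquiv
  (isSumOfTwoSquareZero_map_iff Φ).symm.trans <|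
    (sum_two_square_zero_iff_similar_neg_general hchar (Φ M)).trans (isSimilarToNeg_map_iff Φ)
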